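/- For every Ω ∈ 𝔖₂ and every z ∈ ℂ², the following three quadratic theta relations hold (equations (E10)–(E12)): A7²·X1² − A5²·X3² + A4²·X4² − A3²·X5² = 0, A9²·X1² − A2²·X3² − A8²·X4² + A3²·X6² = 0, and A6²·X1² − A1²·X3² − A8²·X5² + A4²·X6² = 0. -/

import Mathlib

/-!
The theta function at `Ω` squares to a combination of theta functions at `2Ω`: substituting
`n = k + l + c`, `m = k - l` with `c ∈ {0, 1}²` in the double series for `θ[a;b](z, Ω)²` and using
the parallelogram law for the quadratic form gives, for `α, β ∈ ℕ²`,
`θ[α/2; β/2](z, Ω)² = ∑_c (-1)^(β·(α+c)) T_{α+c}(2z) T_c(0)`, where `T_c(w) = θ[c/2; 0](w, 2Ω)`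
depends on `c` modulo 2 only (`theta2_sq`). The substitution is legitimate because the series
converges absolutely (`summable_norm_thetaTerm`): it is dominated by a product of two
one-variable theta series.

Every squared theta constant is thereby a quadratic form in the four numbers `T_c(0)`, and every
squared odd coordinate is a bilinear form in the `T_c(0)` and the `T_c(4z)`. Each of the three
relations becomes a polynomial identity in these eight quantities.
-/

open Complex

/-- Genus-2 theta function with characteristics. -/
noncomputable def theta2 (a b : Fin 2 → ℝ) (z : Fin 2 → ℂ)
    (Ω : Matrix (Fin 2) (Fin 2) ℂ) : ℂ :=
  ∑' n : Fin 2 → ℤ,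
    Complex.exp ((Real.pi : ℂ) * I *
        (∑ i, ∑ j, ((n i : ℂ) + (a i : ℂ)) * Ω i j * ((n j : ℂ) + (a j : ℂ)))
      + 2 * (Real.pi : ℂ) * I * (∑ i, ((n i : ℂ) + (a i : ℂ)) * (z i + (b i : ℂ))))

/-- The Siegel upper half space of degree 2. -/
def IsSiegel (Ω : Matrix (Fin 2) (Fin 2) ℂ) : Prop :=
  Ω.IsSymm ∧ (Matrix.of fun i j => (Ω i j).im).PosDef

noncomputable def A₁ (Ω : Matrix (Fin 2) (Fin 2) ℂ) : ℂ := theta2 ![0, 0] ![0, 0] 0 Ω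
noncomputable def A₂ (Ω : Matrix (Fin 2) (Fin 2) ℂ) : ℂ := theta2 ![0, 0] ![0, 1/2] 0 Ω
noncomputable def A₃ (Ω : Matrix (Fin 2) (Fin 2) ℂ) : ℂ := theta2 ![0, 0] ![1/2, 0] 0 Ω
noncomputable def A₄ (Ω : Matrix (Fin 2) (Fin 2) ℂ) : ℂ := theta2 ![0, 0] ![1/2, 1/2] 0 Ω
noncomputable def A₅ (Ω : Matrix (Fin 2) (Fin 2) ℂ) : ℂ := theta2 ![0, 1/2] ![0, 0] 0 Ω
noncomputable def A₆ (Ω : Matrix (Fin 2) (Fin 2) ℂ) : ℂ := theta2 ![1/2, 0] ![0, 0] 0 Ω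
noncomputable def A₇ (Ω : Matrix (Fin 2) (Fin 2) ℂ) : ℂ := theta2 ![1/2, 1/2] ![0, 0] 0 Ω
noncomputable def A₈ (Ω : Matrix (Fin 2) (Fin 2) ℂ) : ℂ := theta2 ![0, 1/2] ![1/2, 0] 0 Ω
noncomputable def A₉ (Ω : Matrix (Fin 2) (Fin 2) ℂ) : ℂ := theta2 ![1/2, 0] ![0, 1/2] 0 Ω
noncomputable def A₁₀ (Ω : Matrix (Fin 2) (Fin 2) ℂ) : ℂ := theta2 ![1/2, 1/2] ![1/2, 1/2] 0 Ω

noncomputable def X₁ (z : Fin 2 → ℂ) (Ω : Matrix (Fin 2) (Fin 2) ℂ) : ℂ :=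
  theta2 ![0, 1/2] ![0, 1/2] (fun i => 2 * z i) Ω
noncomputable def X₂ (z : Fin 2 → ℂ) (Ω : Matrix (Fin 2) (Fin 2) ℂ) : ℂ :=
  theta2 ![0, 1/2] ![1/2, 1/2] (fun i => 2 * z i) Ω
noncomputable def X₃ (z : Fin 2 → ℂ) (Ω : Matrix (Fin 2) (Fin 2) ℂ) : ℂ :=
  theta2 ![1/2, 1/2] ![0, 1/2] (fun i => 2 * z i) Ω
noncomputable def X₄ (z : Fin 2 → ℂ) (Ω : Matrix (Fin 2) (Fin 2) ℂ) : ℂ :=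
  theta2 ![1/2, 0] ![1/2, 0] (fun i => 2 * z i) Ω
noncomputable def X₅ (z : Fin 2 → ℂ) (Ω : Matrix (Fin 2) (Fin 2) ℂ) : ℂ :=
  theta2 ![1/2, 0] ![1/2, 1/2] (fun i => 2 * z i) Ω
noncomputable def X₆ (z : Fin 2 → ℂ) (Ω : Matrix (Fin 2) (Fin 2) ℂ) : ℂ :=
  theta2 ![1/2, 1/2] ![1/2, 0] (fun i => 2 * z i) Ω

/-- The general term of the series defining `theta2`. -/
noncomputable def thetaTerm (a b : Fin 2 → ℝ) (z : Fin 2 → ℂ)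
    (Ω : Matrix (Fin 2) (Fin 2) ℂ) (n : Fin 2 → ℤ) : ℂ :=
  Complex.exp ((Real.pi : ℂ) * I *
        (∑ i, ∑ j, ((n i : ℂ) + (a i : ℂ)) * Ω i j * ((n j : ℂ) + (a j : ℂ)))
      + 2 * (Real.pi : ℂ) * I * (∑ i, ((n i : ℂ) + (a i : ℂ)) * (z i + (b i : ℂ))))

/-- Up to a constant factor this is the series of norms of `jacobiTheta₂ (i(ta + v)) (it)`. -/
lemma summable_gauss (t : ℝ) (ht : 0 < t) (a v : ℝ) :
    Summable fun n : ℤ =>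
      Real.exp (-Real.pi * t * (n + a) ^ 2 - 2 * Real.pi * ((n + a) * v)) := by
  have h := ((summable_jacobiTheta₂_term_iff (((t * a + v : ℝ) : ℂ) * I) ((t : ℂ) * I)).2
    (by simpa using ht)).norm
  refine (h.mul_left (Real.exp (-Real.pi * t * a ^ 2 - 2 * Real.pi * (a * v)))).congr ?_
  intro n
  rw [norm_jacobiTheta₂_term, ← Real.exp_add]
  congr 1
  simp
  ring

/-- A positive definite real binary quadratic form dominates a multiple of `x² + y²`;
the ratio of determinant to trace serves as the constant. -/
lemma posDef_lower_bound (Y : Matrix (Fin 2) (Fin 2) ℝ) (hY : Y.PosDef) :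
    ∃ t : ℝ, 0 < t ∧ ∀ x : Fin 2 → ℝ,
      t * (x 0 ^ 2 + x 1 ^ 2) ≤ ∑ i, ∑ j, x i * Y i j * x j := by
  have hs : Y 1 0 = Y 0 1 := by simpa using hY.1.apply 0 1
  have h0 : 0 < Y 0 0 := hY.diag_pos
  have h1 : 0 < Y 1 1 := hY.diag_pos
  have hd := hY.det_pos
  rw [Matrix.det_fin_two, hs] at hd
  refine ⟨(Y 0 0 * Y 1 1 - Y 0 1 * Y 0 1) / (Y 0 0 + Y 1 1), by positivity, fun x => ?_⟩
  rw [div_mul_eq_mul_div, div_le_iff₀ (by positivity)]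
  simp only [Fin.sum_univ_two, hs]
  -- By Cayley–Hamilton, `tr Y · xᵀYx - det Y · |x|² = |Yx|²`.
  nlinarith [sq_nonneg (Y 0 0 * x 0 + Y 0 1 * x 1), sq_nonneg (Y 0 1 * x 0 + Y 1 1 * x 1)]

/-- Absolute convergence on the Siegel upper half space: `posDef_lower_bound` for `Im Ω` bounds the
norm of each term by a product of two one-variable Gaussian terms. -/
lemma summable_norm_thetaTerm (a b : Fin 2 → ℝ) (z : Fin 2 → ℂ)
    (Ω : Matrix (Fin 2) (Fin 2) ℂ) (hΩ : IsSiegel Ω) :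
    Summable fun n => ‖thetaTerm a b z Ω n‖ := by
  obtain ⟨t, ht, hle⟩ := posDef_lower_bound _ hΩ.2
  have hs := (summable_gauss t ht (a 0) (z 0).im).mul_of_nonneg
    (summable_gauss t ht (a 1) (z 1).im) (fun _ => (Real.exp_pos _).le)
    (fun _ => (Real.exp_pos _).le)
  rw [← (finTwoArrowEquiv ℤ).summable_iff] at hs
  refine hs.of_nonneg_of_le (fun _ => norm_nonneg _) fun n => ?_
  have h := hle fun i => (n i : ℝ) + a i
  rw [thetaTerm, Complex.norm_exp]
  simp only [Function.comp, finTwoArrowEquiv_apply, ← Real.exp_add]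
  rw [Real.exp_le_exp]
  simp only [Fin.sum_univ_two, Matrix.of_apply] at h ⊢
  simp
  nlinarith [mul_le_mul_of_nonneg_left h Real.pi_pos.le]

lemma IsSiegel.two_smul {Ω : Matrix (Fin 2) (Fin 2) ℂ} (hΩ : IsSiegel Ω) :
    IsSiegel ((2 : ℂ) • Ω) := by
  refine ⟨hΩ.1.smul 2, ?_⟩
  have h := hΩ.2.smul (show (0 : ℝ) < 2 by norm_num)
  convert h using 1
  ext i j
  simp

/-- The pairs of integer vectors are parametrised by the parity vector `c` of the sum of the two,
together with half the sum and half the difference, rounded down. -/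
def pairEquiv :
    (Fin 2 × Fin 2) × ((Fin 2 → ℤ) × (Fin 2 → ℤ)) ≃ (Fin 2 → ℤ) × (Fin 2 → ℤ) where
  toFun x := (![x.2.1 0 + x.2.2 0 + (x.1.1.val : ℤ), x.2.1 1 + x.2.2 1 + (x.1.2.val : ℤ)],
    ![x.2.1 0 - x.2.2 0, x.2.1 1 - x.2.2 1])
  invFun y := ((⟨((y.1 0 + y.2 0) % 2).toNat, by omega⟩,
      ⟨((y.1 1 + y.2 1) % 2).toNat, by omega⟩),
    (![(y.1 0 + y.2 0) / 2, (y.1 1 + y.2 1) / 2],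
      ![(y.1 0 + y.2 0) / 2 - y.2 0, (y.1 1 + y.2 1) / 2 - y.2 1]))
  left_inv := by
    rintro ⟨⟨c, d⟩, k, l⟩
    have hc := c.2
    have hd := d.2
    ext i
    · simp; omega
    · simp; omega
    · fin_cases i <;> simp <;> omega
    · fin_cases i <;> simp <;> omega
  right_inv := by
    rintro ⟨n, m⟩
    ext i
    · fin_cases i <;> simp <;> omega
    · fin_cases i <;> simp

/-- The second-order theta function `T_{ij}(w) = θ[i/2, j/2; 0, 0](w, 2Ω)`. -/
noncomputable def secondOrder (i j : ℕ) (w : Fin 2 → ℂ) (Ω : Matrix (Fin 2) (Fin 2) ℂ) : ℂ :=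
  theta2 ![(i : ℝ) / 2, (j : ℝ) / 2] 0 w ((2 : ℂ) • Ω)

/-- Shifting `n` by the first unit vector; the zero second characteristic leaves no phase. -/
lemma secondOrder_two_left (j : ℕ) (w : Fin 2 → ℂ) (Ω : Matrix (Fin 2) (Fin 2) ℂ) :
    secondOrder 2 j w Ω = secondOrder 0 j w Ω := by
  unfold secondOrder theta2
  rw [← (Equiv.addRight (![1, 0] : Fin 2 → ℤ)).tsum_eq
    (fun n : Fin 2 → ℤ => Complex.exp ((Real.pi : ℂ) * I *
      (∑ i, ∑ k, ((n i : ℂ) + (((![((0 : ℕ) : ℝ) / 2, (j : ℝ) / 2] : Fin 2 → ℝ) i : ℝ) : ℂ)) *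
        ((2 : ℂ) • Ω) i k *
        ((n k : ℂ) + (((![((0 : ℕ) : ℝ) / 2, (j : ℝ) / 2] : Fin 2 → ℝ) k : ℝ) : ℂ)))
      + 2 * (Real.pi : ℂ) * I *
        (∑ i, ((n i : ℂ) + (((![((0 : ℕ) : ℝ) / 2, (j : ℝ) / 2] : Fin 2 → ℝ) i : ℝ) : ℂ)) *
          (w i + (((0 : Fin 2 → ℝ) i : ℝ) : ℂ)))))]
  simp [Fin.sum_univ_two]

lemma secondOrder_two_right (i : ℕ) (w : Fin 2 → ℂ) (Ω : Matrix (Fin 2) (Fin 2) ℂ) :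
    secondOrder i 2 w Ω = secondOrder i 0 w Ω := by
  unfold secondOrder theta2
  rw [← (Equiv.addRight (![0, 1] : Fin 2 → ℤ)).tsum_eq
    (fun n : Fin 2 → ℤ => Complex.exp ((Real.pi : ℂ) * I *
      (∑ m, ∑ k, ((n m : ℂ) + (((![(i : ℝ) / 2, ((0 : ℕ) : ℝ) / 2] : Fin 2 → ℝ) m : ℝ) : ℂ)) *
        ((2 : ℂ) • Ω) m k *
        ((n k : ℂ) + (((![(i : ℝ) / 2, ((0 : ℕ) : ℝ) / 2] : Fin 2 → ℝ) k : ℝ) : ℂ)))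
      + 2 * (Real.pi : ℂ) * I *
        (∑ m, ((n m : ℂ) + (((![(i : ℝ) / 2, ((0 : ℕ) : ℝ) / 2] : Fin 2 → ℝ) m : ℝ) : ℂ)) *
          (w m + (((0 : Fin 2 → ℝ) m : ℝ) : ℂ)))))]
  simp [Fin.sum_univ_two]

/-- One term of the double series for `θ²`, after the substitution of `pairEquiv`. -/
lemma thetaTerm_mul (α₀ α₁ β₀ β₁ : ℕ) (z : Fin 2 → ℂ) (Ω : Matrix (Fin 2) (Fin 2) ℂ)
    (c : Fin 2 × Fin 2) (k l : Fin 2 → ℤ) :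
    thetaTerm ![(α₀ : ℝ) / 2, (α₁ : ℝ) / 2] ![(β₀ : ℝ) / 2, (β₁ : ℝ) / 2] z Ω
        (pairEquiv (c, (k, l))).1 *
      thetaTerm ![(α₀ : ℝ) / 2, (α₁ : ℝ) / 2] ![(β₀ : ℝ) / 2, (β₁ : ℝ) / 2] z Ω
        (pairEquiv (c, (k, l))).2 =
    (-1) ^ (β₀ * (α₀ + c.1.val) + β₁ * (α₁ + c.2.val)) *
      (thetaTerm ![((α₀ + c.1.val : ℕ) : ℝ) / 2, ((α₁ + c.2.val : ℕ) : ℝ) / 2] 0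
          (fun i => 2 * z i) ((2 : ℂ) • Ω) k *
        thetaTerm ![(c.1.val : ℝ) / 2, (c.2.val : ℝ) / 2] 0 0 ((2 : ℂ) • Ω) l) := by
  have hsign : ((-1 : ℂ)) ^ (β₀ * (α₀ + c.1.val) + β₁ * (α₁ + c.2.val)) =
      Complex.exp (((β₀ * (α₀ + c.1.val) + β₁ * (α₁ + c.2.val) : ℕ) : ℂ) * (Real.pi * I)) := by
    rw [Complex.exp_nat_mul, Complex.exp_pi_mul_I]
  rw [hsign]
  unfold thetaTerm
  rw [← Complex.exp_add, ← Complex.exp_add, ← Complex.exp_add, Complex.exp_eq_exp_iff_exists_int]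
  -- The characteristic `β` contributes `2πi β·(k + (α + c)/2)`; its part `2πi β·k` is a period.
  refine ⟨β₀ * k 0 + β₁ * k 1, ?_⟩
  simp [Fin.sum_univ_two, pairEquiv]
  ring

/-- Squares of theta functions with half-integral characteristics are bilinear in the second-order
theta functions. -/
lemma theta2_sq (Ω : Matrix (Fin 2) (Fin 2) ℂ) (hΩ : IsSiegel Ω) (z : Fin 2 → ℂ)
    (α₀ α₁ β₀ β₁ : ℕ) :
    theta2 ![(α₀ : ℝ) / 2, (α₁ : ℝ) / 2] ![(β₀ : ℝ) / 2, (β₁ : ℝ) / 2] z Ω ^ 2 =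
      ∑ i : Fin 2, ∑ j : Fin 2, (-1) ^ (β₀ * (α₀ + i.val) + β₁ * (α₁ + j.val)) *
        (secondOrder (α₀ + i.val) (α₁ + j.val) (fun i => 2 * z i) Ω *
          secondOrder i.val j.val 0 Ω) := by
  have hs := summable_norm_thetaTerm ![(α₀ : ℝ) / 2, (α₁ : ℝ) / 2]
    ![(β₀ : ℝ) / 2, (β₁ : ℝ) / 2] z Ω hΩ
  have hs2 := summable_mul_of_summable_norm hs hs
  rw [sq]
  change (∑' n, thetaTerm _ _ z Ω n) * (∑' n, thetaTerm _ _ z Ω n) = _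
  rw [tsum_mul_tsum_of_summable_norm hs hs, ← pairEquiv.tsum_eq]
  refine (pairEquiv.summable_iff.2 hs2).tsum_prod.trans ?_
  rw [tsum_fintype, Fintype.sum_prod_type]
  refine Finset.sum_congr rfl fun i _ => Finset.sum_congr rfl fun j _ => ?_
  change _ = _ * ((∑' n, thetaTerm _ _ _ _ n) * (∑' n, thetaTerm _ _ _ _ n))
  rw [tsum_mul_tsum_of_summable_norm (summable_norm_thetaTerm _ _ _ _ hΩ.two_smul)
    (summable_norm_thetaTerm _ _ _ _ hΩ.two_smul), ← tsum_mul_left]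
  exact tsum_congr fun x => thetaTerm_mul α₀ α₁ β₀ β₁ z Ω (i, j) x.1 x.2


theorem theta_relations_E10_E12
    (Ω : Matrix (Fin 2) (Fin 2) ℂ) (hΩ : IsSiegel Ω) (z : Fin 2 → ℂ) :
    (A₇ Ω ^ 2 * X₁ z Ω ^ 2 - A₅ Ω ^ 2 * X₃ z Ω ^ 2 + A₄ Ω ^ 2 * X₄ z Ω ^ 2 - A₃ Ω ^ 2 * X₅ z Ω ^ 2 = 0) ∧
    (A₉ Ω ^ 2 * X₁ z Ω ^ 2 - A₂ Ω ^ 2 * X₃ z Ω ^ 2 - A₈ Ω ^ 2 * X₄ z Ω ^ 2 + A₃ Ω ^ 2 * X₆ z Ω ^ 2 = 0) ∧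
    (A₆ Ω ^ 2 * X₁ z Ω ^ 2 - A₁ Ω ^ 2 * X₃ z Ω ^ 2 - A₈ Ω ^ 2 * X₅ z Ω ^ 2 + A₄ Ω ^ 2 * X₆ z Ω ^ 2 = 0) := by
  have hz : (fun _ => 0) = (0 : Fin 2 → ℂ) := rfl
  have hA₁ := theta2_sq Ω hΩ 0 0 0 0 0
  rw [show theta2 _ _ _ Ω = A₁ Ω by simp [A₁]] at hA₁
  have hA₂ := theta2_sq Ω hΩ 0 0 0 0 1
  rw [show theta2 _ _ _ Ω = A₂ Ω by simp [A₂]] at hA₂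
  have hA₃ := theta2_sq Ω hΩ 0 0 0 1 0
  rw [show theta2 _ _ _ Ω = A₃ Ω by simp [A₃]] at hA₃
  have hA₄ := theta2_sq Ω hΩ 0 0 0 1 1
  rw [show theta2 _ _ _ Ω = A₄ Ω by simp [A₄]] at hA₄
  have hA₅ := theta2_sq Ω hΩ 0 0 1 0 0
  rw [show theta2 _ _ _ Ω = A₅ Ω by simp [A₅]] at hA₅
  have hA₆ := theta2_sq Ω hΩ 0 1 0 0 0
  rw [show theta2 _ _ _ Ω = A₆ Ω by simp [A₆]] at hA₆
  have hA₇ := theta2_sq Ω hΩ 0 1 1 0 0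
  rw [show theta2 _ _ _ Ω = A₇ Ω by simp [A₇]] at hA₇
  have hA₈ := theta2_sq Ω hΩ 0 0 1 1 0
  rw [show theta2 _ _ _ Ω = A₈ Ω by simp [A₈]] at hA₈
  have hA₉ := theta2_sq Ω hΩ 0 1 0 0 1
  rw [show theta2 _ _ _ Ω = A₉ Ω by simp [A₉]] at hA₉
  have hX₁ := theta2_sq Ω hΩ (fun i => 2 * z i) 0 1 0 1
  rw [show theta2 _ _ _ Ω = X₁ z Ω by simp [X₁]] at hX₁
  have hX₃ := theta2_sq Ω hΩ (fun i => 2 * z i) 1 1 0 1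
  rw [show theta2 _ _ _ Ω = X₃ z Ω by simp [X₃]] at hX₃
  have hX₄ := theta2_sq Ω hΩ (fun i => 2 * z i) 1 0 1 0
  rw [show theta2 _ _ _ Ω = X₄ z Ω by simp [X₄]] at hX₄
  have hX₅ := theta2_sq Ω hΩ (fun i => 2 * z i) 1 0 1 1
  rw [show theta2 _ _ _ Ω = X₅ z Ω by simp [X₅]] at hX₅
  have hX₆ := theta2_sq Ω hΩ (fun i => 2 * z i) 1 1 1 0
  rw [show theta2 _ _ _ Ω = X₆ z Ω by simp [X₆]] at hX₆
  simp [Fin.sum_univ_two, secondOrder_two_left, secondOrder_two_right, hz]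
    at hA₁ hA₂ hA₃ hA₄ hA₅ hA₆ hA₇ hA₈ hA₉ hX₁ hX₃ hX₄ hX₅ hX₆
  refine ⟨?_, ?_, ?_⟩
  · rw [hA₇, hX₁, hA₅, hX₃, hA₄, hX₄, hA₃, hX₅]
    ring
  · rw [hA₉, hX₁, hA₂, hX₃, hA₈, hX₄, hA₃, hX₆]
    ring
  · rw [hA₆, hX₁, hA₁, hX₃, hA₈, hX₅, hA₄, hX₆]
    ring
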